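/- Let ℓ > 0 and let γ : ℝ → ℝ³ be a continuously differentiable ℓ-periodic curve. Then γ is D₂-symmetric if and only if the arc α := γ|[0, ℓ/4] satisfies α(0) ∈ ℝe₃, α(ℓ/4) ∈ ℝe₁, α'(0) ∈ span{e₁, e₂}, α'(ℓ/4) ∈ span{e₂, e₃}, and γ coincides with the ℓ-periodic extension of the glued map built from α. -/

import Mathlib

/-!
Modulo `ℓ`, the maps `ψ₁, ψ₂, ψ₃` and the rotations `R₁, R₂, R₃` multiply in the same way: both
families are the involutions of a Klein four-group. A D₂-symmetric curve is therefore an equivariant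
map, determined by its values on the fundamental domain `[0, ℓ/4]`; the glued map spells this out.
The parameter `0` is fixed by `ψ₃` modulo `ℓ` and `ℓ/4` is fixed by `ψ₁`, which puts `γ 0` and
`γ (ℓ/4)` on the axes of `R₃` and `R₁`. The coordinate along that axis is even about the fixed
parameter, so its derivative vanishes there.

Conversely, the glued formula gives equivariance on `[0, ℓ/4]` except at those endpoints which
half-open intervals miss; there it follows because `R₃` fixes `γ 0` and `R₁` fixes `γ (ℓ/4)`.
-/

noncomputable section

open Real Set

/-- Euclidean three-space. -/
abbrev E3 : Type := EuclideanSpace ℝ (Fin 3)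

/-- The vector (a,b,c) ∈ ℝ³ (with the Euclidean norm). -/
def vec3 (a b c : ℝ) : E3 := (WithLp.equiv 2 (Fin 3 → ℝ)).symm ![a, b, c]

/-- The standard basis vectors. -/
def e1 : E3 := vec3 1 0 0
def e2 : E3 := vec3 0 1 0
def e3 : E3 := vec3 0 0 1

/-- The rotations `R₁, R₂, R₃` by angle π about the coordinate axes `ℝe₁, ℝe₂, ℝe₃`
(indexed by `0, 1, 2 : Fin 3`). -/
def Rot : Fin 3 → E3 → E3 :=
  ![fun x => vec3 (x 0) (-x 1) (-x 2),
    fun x => vec3 (-x 0) (x 1) (-x 2),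
    fun x => vec3 (-x 0) (-x 1) (x 2)]

/-- The dihedral parameter transformations `ψ₁^ℓ(t) = ℓ/2 - t`, `ψ₂^ℓ(t) = t - ℓ/2`,
`ψ₃^ℓ(t) = ℓ - t` (indexed by `0, 1, 2 : Fin 3`). -/
def psi (ℓ : ℝ) : Fin 3 → ℝ → ℝ :=
  ![fun t => ℓ / 2 - t, fun t => t - ℓ / 2, fun t => ℓ - t]

/-- An `ℓ`-periodic curve `γ : ℝ → ℝ³` is D₂-symmetric if `Rᵢ(γ(ψᵢ^ℓ(t))) = γ(t)`
for all `t ∈ ℝ` and `i = 1,2,3`. -/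
def DihedralSymmetric (ℓ : ℝ) (γ : ℝ → E3) : Prop :=
  ∀ i : Fin 3, ∀ t : ℝ, Rot i (γ (psi ℓ i t)) = γ t

/-- The `ℓ`-periodic extension of the glued map built from a generating arc `α`:
`g(t) = α(t)` on `[0, ℓ/4)`, `g(t) = Rᵢ(α(ψᵢ^ℓ(t)))` on `[iℓ/4, (i+1)ℓ/4)` for `i = 1,2,3`,
extended `ℓ`-periodically. -/
def glue (ℓ : ℝ) (α : ℝ → E3) (t : ℝ) : E3 :=
  let s := t - ℓ * (⌊t / ℓ⌋ : ℝ)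
  if s < ℓ / 4 then α s
  else if s < ℓ / 2 then Rot 0 (α (psi ℓ 0 s))
  else if s < 3 * ℓ / 4 then Rot 1 (α (psi ℓ 1 s))
  else Rot 2 (α (psi ℓ 2 s))

open EuclideanSpace (single)

lemma e1_eq_single : e1 = single 0 1 := by
  ext i; fin_cases i <;> simp [e1, vec3]

lemma e2_eq_single : e2 = single 1 1 := by
  ext i; fin_cases i <;> simp [e2, vec3]

lemma e3_eq_single : e3 = single 2 1 := by
  ext i; fin_cases i <;> simp [e3, vec3]

lemma rot_apply (i j : Fin 3) (x : E3) : Rot i x j = if j = i then x j else -x j := by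
  fin_cases i <;> fin_cases j <;> rfl

lemma rot_involutive (i : Fin 3) : Function.Involutive (Rot i) := fun x => by
  ext j
  by_cases hji : j = i <;> simp [rot_apply, hji]

lemma rot_rot_of_ne {i j k : Fin 3} (hij : i ≠ j) (hik : i ≠ k) (hjk : j ≠ k) (x : E3) :
    Rot i (Rot j x) = Rot k x := by
  have hcover : ∀ m, m = i ∨ m = j ∨ m = k := by lia
  ext m
  rcases hcover m with rfl | rfl | rfl <;>
    simp [rot_apply, hij, hik, hjk, hij.symm, hik.symm, hjk.symm]

lemma rot_eq_self_iff {i : Fin 3} {x : E3} : Rot i x = x ↔ ∃ c : ℝ, x = c • single i 1 := by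
  constructor
  · intro h
    refine ⟨x i, ?_⟩
    ext j
    by_cases hji : j = i
    · simp [hji]
    · have hj : -x j = x j := by simpa [rot_apply, hji] using congrArg (fun y : E3 => y j) h
      simpa [hji] using neg_eq_self.mp hj
  · rintro ⟨c, rfl⟩
    ext j
    by_cases hji : j = i <;> simp [rot_apply, hji]

lemma mem_span_single_pair {i j k : Fin 3} (hij : i ≠ j) (hik : i ≠ k) (hjk : j ≠ k) {x : E3}
    (hx : x k = 0) : x ∈ Submodule.span ℝ ({single i 1, single j 1} : Set E3) := by
  have hcover : ∀ m, m = i ∨ m = j ∨ m = k := by lia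
  refine Submodule.mem_span_pair.mpr ⟨x i, x j, ?_⟩
  ext m
  rcases hcover m with rfl | rfl | rfl <;> simp [hx, hij, hij.symm, hik.symm, hjk.symm]

lemma deriv_eq_zero_of_even_about {𝕜 F : Type*} [NontriviallyNormedField 𝕜] [NeZero (2 : 𝕜)]
    [NormedAddCommGroup F] [NormedSpace 𝕜 F] {f : 𝕜 → F} {a : 𝕜}
    (h : ∀ t, f (2 * a - t) = f t) : deriv f a = 0 := by
  have hneg : deriv f a = -deriv f a :=
    calc deriv f a = deriv (fun t => f (2 * a - t)) a := by simp only [h]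
      _ = -deriv f (2 * a - a) := deriv_comp_const_sub f (2 * a) a
      _ = -deriv f a := by rw [two_mul, add_sub_cancel_right]
  have hsmul : (2 : 𝕜) • deriv f a = 0 := by rw [two_smul, ← eq_neg_iff_add_eq_zero, ← hneg]
  exact (smul_eq_zero.mp hsmul).resolve_left two_ne_zero

lemma deriv_apply_eq_zero_of_rot_reflect {γ : ℝ → E3} {a : ℝ} {i : Fin 3}
    (hγ : DifferentiableAt ℝ γ a) (h : ∀ t, Rot i (γ (2 * a - t)) = γ t) : deriv γ a i = 0 := by
  have hcoord : HasDerivAt (fun t => γ t i) (deriv γ a i) a :=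
    (EuclideanSpace.proj i : E3 →L[ℝ] ℝ).hasFDerivAt.comp_hasDerivAt a hγ.hasDerivAt
  rw [← hcoord.deriv]
  exact deriv_eq_zero_of_even_about fun t => by
    simpa [rot_apply] using congrArg (fun y : E3 => y i) (h t)

section Parameters

variable {ℓ : ℝ}

lemma psi_zero (ℓ t : ℝ) : psi ℓ 0 t = ℓ / 2 - t := rfl
lemma psi_one (ℓ t : ℝ) : psi ℓ 1 t = t - ℓ / 2 := rfl
lemma psi_two (ℓ t : ℝ) : psi ℓ 2 t = ℓ - t := rfl

variable {β : Type*} {f : ℝ → β}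

lemma periodic_comp_psi (hf : Function.Periodic f ℓ) (i : Fin 3) :
    Function.Periodic (fun t => f (psi ℓ i t)) ℓ := by
  fin_cases i
  · exact hf.const_sub _
  · exact hf.sub_const _
  · exact hf.const_sub _

lemma apply_psi_psi_self (hf : Function.Periodic f ℓ) (i : Fin 3) (t : ℝ) :
    f (psi ℓ i (psi ℓ i t)) = f t := by
  fin_cases i
  · exact congrArg f (sub_sub_cancel _ _)
  · rw [← hf.sub_eq t]
    exact congrArg f (by simp only [Fin.mk_one, psi_one]; ring)
  · exact congrArg f (sub_sub_cancel _ _)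

lemma apply_psi_psi_of_ne (hf : Function.Periodic f ℓ) {i j k : Fin 3}
    (hij : i ≠ j) (hik : i ≠ k) (hjk : j ≠ k) (t : ℝ) :
    f (psi ℓ i (psi ℓ j t)) = f (psi ℓ k t) := by
  have hmod : psi ℓ i (psi ℓ j t) = psi ℓ k t ∨ psi ℓ i (psi ℓ j t) + ℓ = psi ℓ k t ∨
      psi ℓ i (psi ℓ j t) - ℓ = psi ℓ k t := by
    fin_cases i <;> fin_cases j <;> fin_cases k <;> grind [psi_zero, psi_one, psi_two]
  rcases hmod with h | h | h
  · rw [h]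
  · rw [← h, hf]
  · rw [← h, hf.sub_eq]

lemma forall_of_forall_mem_Icc_quarter (hℓ : 0 < ℓ) {P : ℝ → Prop} (hP : Function.Periodic P ℓ)
    (h : ∀ s ∈ Icc 0 (ℓ / 4), P s ∧ ∀ i, P (psi ℓ i s)) (t : ℝ) : P t := by
  obtain ⟨r, ⟨hr0, hrℓ⟩, hr⟩ := hP.exists_mem_Ico₀ hℓ t
  rw [hr]
  rcases le_total r (ℓ / 2) with hhalf | hhalf
  · rcases le_total r (ℓ / 4) with hquarter | hquarter
    · exact (h r ⟨hr0, hquarter⟩).1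
    · simpa [psi_zero] using (h (ℓ / 2 - r) ⟨by linarith, by linarith⟩).2 0
  · rcases le_total r (3 * ℓ / 4) with hquarter | hquarter
    · rw [← hP.sub_eq]
      convert (h (r - ℓ / 2) ⟨by linarith, by linarith⟩).2 1 using 1
      rw [psi_one]
      ring
    · simpa [psi_two] using (h (ℓ - r) ⟨by linarith, by linarith⟩).2 2

end Parameters

section Gluing

variable {ℓ : ℝ} {α : ℝ → E3}

lemma glue_periodic (hℓ : ℓ ≠ 0) (α : ℝ → E3) : Function.Periodic (glue ℓ α) ℓ := fun t => by
  have hs : t + ℓ - ℓ * (⌊(t + ℓ) / ℓ⌋ : ℝ) = t - ℓ * (⌊t / ℓ⌋ : ℝ) := by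
    rw [add_div, div_self hℓ, Int.floor_add_one]
    push_cast
    ring
  simp only [glue, hs]

lemma glue_of_mem_Ico {t : ℝ} (ht : t ∈ Ico 0 ℓ) :
    glue ℓ α t = if t < ℓ / 4 then α t else if t < ℓ / 2 then Rot 0 (α (psi ℓ 0 t))
      else if t < 3 * ℓ / 4 then Rot 1 (α (psi ℓ 1 t)) else Rot 2 (α (psi ℓ 2 t)) := by
  have hℓ : 0 < ℓ := ht.1.trans_lt ht.2
  have hfloor : ⌊t / ℓ⌋ = 0 :=
    Int.floor_eq_zero_iff.mpr ⟨div_nonneg ht.1 hℓ.le, (div_lt_one hℓ).mpr ht.2⟩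
  simp only [glue, hfloor, Int.cast_zero, mul_zero, sub_zero]

lemma glue_psi_zero {s : ℝ} (hs : s ∈ Ioc 0 (ℓ / 4)) :
    glue ℓ α (psi ℓ 0 s) = Rot 0 (α s) := by
  obtain ⟨hs0, hs1⟩ := hs
  rw [psi_zero, glue_of_mem_Ico ⟨by linarith, by linarith⟩, if_neg (by linarith),
    if_pos (by linarith), psi_zero, sub_sub_cancel]

lemma glue_psi_one {s : ℝ} (hs : s ∈ Ico 0 (ℓ / 4)) :
    glue ℓ α (psi ℓ 1 s) = Rot 1 (α s) := by
  obtain ⟨hs0, hs1⟩ := hs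
  have hmod : psi ℓ 1 s + ℓ = s + ℓ / 2 := by rw [psi_one]; ring
  rw [← glue_periodic (by linarith), hmod, glue_of_mem_Ico ⟨by linarith, by linarith⟩,
    if_neg (by linarith), if_neg (by linarith), if_pos (by linarith), psi_one, add_sub_cancel_right]

lemma glue_psi_two {s : ℝ} (hs : s ∈ Ioc 0 (ℓ / 4)) :
    glue ℓ α (psi ℓ 2 s) = Rot 2 (α s) := by
  obtain ⟨hs0, hs1⟩ := hs
  rw [psi_two, glue_of_mem_Ico ⟨by linarith, by linarith⟩, if_neg (by linarith),
    if_neg (by linarith), if_neg (by linarith), psi_two, sub_sub_cancel]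

lemma apply_psi_of_eq_glue {γ : ℝ → E3} (hℓ : 0 < ℓ) (hfix₀ : Rot 2 (γ 0) = γ 0)
    (hfix₁ : Rot 0 (γ (ℓ / 4)) = γ (ℓ / 4)) (hg : γ = glue ℓ γ) {s : ℝ} (hs : s ∈ Icc 0 (ℓ / 4))
    (i : Fin 3) : γ (psi ℓ i s) = Rot i (γ s) := by
  have hper : Function.Periodic γ ℓ := by
    rw [hg]
    exact glue_periodic hℓ.ne' γ
  have hψ₁ : ∀ s ∈ Ioc 0 (ℓ / 4), γ (psi ℓ 0 s) = Rot 0 (γ s) := fun _ hs =>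
    (congrFun hg _).trans (glue_psi_zero hs)
  have hψ₂ : ∀ s ∈ Ico 0 (ℓ / 4), γ (psi ℓ 1 s) = Rot 1 (γ s) := fun _ hs =>
    (congrFun hg _).trans (glue_psi_one hs)
  have hψ₃ : ∀ s ∈ Ioc 0 (ℓ / 4), γ (psi ℓ 2 s) = Rot 2 (γ s) := fun _ hs =>
    (congrFun hg _).trans (glue_psi_two hs)
  obtain ⟨hs0, hs1⟩ := hs
  fin_cases i
  · obtain rfl | hpos := hs0.eq_or_lt
    · have hhalf : γ (psi ℓ 0 0) = γ (psi ℓ 1 0) := by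
        rw [← hper (psi ℓ 1 0), psi_zero, psi_one]
        congr 1
        ring
      calc γ (psi ℓ 0 0) = Rot 1 (γ 0) := hhalf.trans (hψ₂ 0 ⟨le_rfl, by positivity⟩)
        _ = Rot 0 (Rot 2 (γ 0)) := (rot_rot_of_ne (by decide) (by decide) (by decide) _).symm
        _ = Rot 0 (γ 0) := by rw [hfix₀]
    · exact hψ₁ s ⟨hpos, hs1⟩
  · obtain rfl | hlt := hs1.eq_or_lt
    · have hthree : γ (psi ℓ 1 (ℓ / 4)) = γ (psi ℓ 2 (ℓ / 4)) := by
        rw [← hper (psi ℓ 1 (ℓ / 4)), psi_one, psi_two]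
        congr 1
        ring
      calc γ (psi ℓ 1 (ℓ / 4)) = Rot 2 (γ (ℓ / 4)) := hthree.trans (hψ₃ _ ⟨by positivity, le_rfl⟩)
        _ = Rot 1 (Rot 0 (γ (ℓ / 4))) :=
          (rot_rot_of_ne (by decide) (by decide) (by decide) _).symm
        _ = Rot 1 (γ (ℓ / 4)) := by rw [hfix₁]
    · exact hψ₂ s ⟨hs0, hlt⟩
  · obtain rfl | hpos := hs0.eq_or_lt
    · calc γ (psi ℓ 2 0) = γ 0 := by rw [psi_two, sub_zero, hper.eq]
        _ = Rot 2 (γ 0) := hfix₀.symm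
    · exact hψ₃ s ⟨hpos, hs1⟩

end Gluing

namespace DihedralSymmetric

variable {ℓ : ℝ} {γ : ℝ → E3}

lemma periodic (h : DihedralSymmetric ℓ γ) : Function.Periodic γ ℓ := fun t => by
  have hmod : psi ℓ 1 (psi ℓ 1 (t + ℓ)) = t := by simp only [psi_one]; ring
  rw [← h 1 (t + ℓ), ← h 1 (psi ℓ 1 (t + ℓ)), hmod, rot_involutive]

lemma rot_two_reflect_zero (h : DihedralSymmetric ℓ γ) (t : ℝ) : Rot 2 (γ (2 * 0 - t)) = γ t := by
  rw [mul_zero, zero_sub, ← h.periodic.sub_eq']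
  exact h 2 t

lemma rot_zero_reflect_quarter (h : DihedralSymmetric ℓ γ) (t : ℝ) :
    Rot 0 (γ (2 * (ℓ / 4) - t)) = γ t := by
  rw [show 2 * (ℓ / 4) = ℓ / 2 by ring]
  exact h 0 t

lemma glue_eq_self (h : DihedralSymmetric ℓ γ) (t : ℝ) : glue ℓ γ t = γ t := by
  have hs : γ (t - ℓ * (⌊t / ℓ⌋ : ℝ)) = γ t := by
    rw [mul_comm, h.periodic.sub_int_mul_eq]
  simp only [glue, h 0 _, h 1 _, h 2 _, hs, ite_self]

lemma of_forall_mem_Icc_quarter (hℓ : 0 < ℓ) (hper : Function.Periodic γ ℓ)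
    (h : ∀ s ∈ Icc 0 (ℓ / 4), ∀ i, γ (psi ℓ i s) = Rot i (γ s)) : DihedralSymmetric ℓ γ := by
  suffices ∀ t i, Rot i (γ (psi ℓ i t)) = γ t from fun i t => this t i
  refine forall_of_forall_mem_Icc_quarter hℓ (fun t => ?_) fun s hs => ⟨fun i => ?_, fun j i => ?_⟩
  · simp only [hper t, periodic_comp_psi hper _ t]
  · rw [h s hs, rot_involutive]
  · obtain rfl | hij := eq_or_ne i j
    · rw [apply_psi_psi_self hper, h s hs]
    · obtain ⟨k, hik, hjk⟩ : ∃ k, i ≠ k ∧ j ≠ k := by decide +revert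
      rw [apply_psi_psi_of_ne hper hij hik hjk, h s hs, h s hs, rot_rot_of_ne hik hij hjk.symm]

lemma of_eq_glue (hℓ : 0 < ℓ) (hfix₀ : Rot 2 (γ 0) = γ 0)
    (hfix₁ : Rot 0 (γ (ℓ / 4)) = γ (ℓ / 4)) (hg : γ = glue ℓ γ) : DihedralSymmetric ℓ γ :=
  of_forall_mem_Icc_quarter hℓ (hg ▸ glue_periodic hℓ.ne' γ) fun _ hs =>
    apply_psi_of_eq_glue hℓ hfix₀ hfix₁ hg hs

end DihedralSymmetric

theorem dihedralSymmetric_iff_glued_C1_general {ℓ : ℝ} (hℓ : 0 < ℓ) {γ : ℝ → E3}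
    (hγ₀ : DifferentiableAt ℝ γ 0) (hγ₁ : DifferentiableAt ℝ γ (ℓ / 4)) :
    DihedralSymmetric ℓ γ ↔
      ((∃ c : ℝ, γ 0 = c • e3) ∧ (∃ c : ℝ, γ (ℓ / 4) = c • e1) ∧
        deriv γ 0 ∈ Submodule.span ℝ ({e1, e2} : Set E3) ∧
        deriv γ (ℓ / 4) ∈ Submodule.span ℝ ({e2, e3} : Set E3) ∧
        ∀ t, γ t = glue ℓ γ t) := by
  simp only [e1_eq_single, e2_eq_single, e3_eq_single, ← rot_eq_self_iff]
  constructor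
  · intro h
    have hfix₀ : Rot 2 (γ 0) = γ 0 := by simpa using h.rot_two_reflect_zero 0
    have hfix₁ : Rot 0 (γ (ℓ / 4)) = γ (ℓ / 4) := by
      simpa [two_mul] using h.rot_zero_reflect_quarter (ℓ / 4)
    have hderiv₀ : deriv γ 0 2 = 0 :=
      deriv_apply_eq_zero_of_rot_reflect hγ₀ h.rot_two_reflect_zero
    have hderiv₁ : deriv γ (ℓ / 4) 0 = 0 :=
      deriv_apply_eq_zero_of_rot_reflect hγ₁ h.rot_zero_reflect_quarter
    exact ⟨hfix₀, hfix₁, mem_span_single_pair (by decide) (by decide) (by decide) hderiv₀,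
      mem_span_single_pair (by decide) (by decide) (by decide) hderiv₁,
      fun t => (h.glue_eq_self t).symm⟩
  · rintro ⟨hfix₀, hfix₁, -, -, hg⟩
    exact DihedralSymmetric.of_eq_glue hℓ hfix₀ hfix₁ (funext hg)

/-- A continuously differentiable `ℓ`-periodic curve `γ` is D₂-symmetric
if and only if the arc `α := γ|[0, ℓ/4]` satisfies `α(0) ∈ ℝe₃`, `α(ℓ/4) ∈ ℝe₁`,
`α'(0) ∈ span{e₁, e₂}`, `α'(ℓ/4) ∈ span{e₂, e₃}`, and `γ` coincides with the `ℓ`-periodic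
extension of the glued map built from `α`. -/
theorem dihedralSymmetric_iff_glued_C1 (ℓ : ℝ) (hℓ : 0 < ℓ) (γ : ℝ → E3)
    (hγ : ContDiff ℝ 1 γ) (hper : ∀ t, γ (t + ℓ) = γ t) :
    DihedralSymmetric ℓ γ ↔
      ((∃ c : ℝ, γ 0 = c • e3) ∧ (∃ c : ℝ, γ (ℓ / 4) = c • e1) ∧
        deriv γ 0 ∈ Submodule.span ℝ ({e1, e2} : Set E3) ∧
        deriv γ (ℓ / 4) ∈ Submodule.span ℝ ({e2, e3} : Set E3) ∧
        ∀ t, γ t = glue ℓ γ t) := by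
  have hdiff : Differentiable ℝ γ := hγ.differentiable one_ne_zero
  exact dihedralSymmetric_iff_glued_C1_general hℓ (hdiff 0) (hdiff (ℓ / 4))
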